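/- In the setting of Ulam's method for the approximating maps τ_n, let n ≥ N and k ≥ 1, and let f_{n,k} be a normalized fixed point of the Ulam operator P^{(k)}_{τ_n} (so f_{n,k} is constant on each J_i, f_{n,k} ≥ 0, ∫₀¹ f_{n,k} dλ = 1 and Q^{(k)}(P_{τ_n} f_{n,k}) = f_{n,k} λ-a.e.). Then f_{n,k} is λ-a.e. equal to a non-increasing function on [0,1]. -/

import Mathlib

open MeasureTheory Set Filter

/-- Lebesgue measure on the unit interval `I = [0,1]`. -/
noncomputable def lam : MeasureTheory.Measure ℝ := MeasureTheory.volume.restrict (Set.Icc 0 1)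

/-- A piecewise convex map `τ` on `[0,1]` with countably many branches, whose partition
points form a strictly decreasing sequence `1 = a 0 > a 1 > ⋯` tending to `0`; on each
`[a (m+1), a m)` the map is continuous, convex and differentiable, vanishes at the left
endpoint, and has right derivative `d (m+1) = τ'(a (m+1)) > 0` there; there is `N ≥ 1`
with `D₁ = ∑_{m=N+1}^∞ 1/τ'(a m) < 1` and `C = ∑_{m=1}^∞ 1/τ'(a m) < ∞`. -/
structure PCApprox (τ : ℝ → ℝ) (a d : ℕ → ℝ) (N : ℕ) : Prop where
  mapsTo : Set.MapsTo τ (Set.Icc 0 1) (Set.Icc 0 1)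
  a_zero : a 0 = 1
  a_anti : StrictAnti a
  a_lim : Filter.Tendsto a Filter.atTop (nhds 0)
  cont : ∀ m : ℕ, ContinuousOn τ (Set.Ico (a (m+1)) (a m))
  conv : ∀ m : ℕ, ConvexOn ℝ (Set.Ico (a (m+1)) (a m)) τ
  diff : ∀ m : ℕ, ∀ x ∈ Set.Ico (a (m+1)) (a m),
    DifferentiableWithinAt ℝ τ (Set.Ico (a (m+1)) (a m)) x
  map_a : ∀ m : ℕ, τ (a (m+1)) = 0
  deriv_a : ∀ m : ℕ, HasDerivWithinAt τ (d (m+1)) (Set.Ici (a (m+1))) (a (m+1))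
  d_pos : ∀ m : ℕ, 0 < d (m+1)
  N_pos : 1 ≤ N
  sum_d : Summable fun m => 1 / d (m+1)
  D₁_lt : (∑' m : ℕ, 1 / d (m + N + 1)) < 1

/-- `D₁ = ∑_{m=N+1}^∞ 1/τ'(a m)`. -/
noncomputable def D₁ (d : ℕ → ℝ) (N : ℕ) : ℝ := ∑' m : ℕ, 1 / d (m + N + 1)

/-- `C = ∑_{m=1}^∞ 1/τ'(a m)`. -/
noncomputable def Cconst (d : ℕ → ℝ) : ℝ := ∑' m : ℕ, 1 / d (m + 1)

/-- `D = ∑_{m=1}^N 1/(a m · τ'(a m))`. -/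
noncomputable def Dconst (a d : ℕ → ℝ) (N : ℕ) : ℝ :=
  ∑ m ∈ Finset.range N, 1 / (a (m+1) * d (m+1))

/-- The approximating map `τ_n`: `τ_n x = x / a n` for `x < a n`, and `τ_n x = τ x`
for `a n ≤ x`. -/
noncomputable def tauN (τ : ℝ → ℝ) (a : ℕ → ℝ) (n : ℕ) : ℝ → ℝ :=
  fun x => if x < a n then x / a n else τ x

/-- Essential supremum (with respect to `λ` on `[0,1]`) of a real function, valued in `ℝ≥0∞`. -/
noncomputable def esssup (f : ℝ → ℝ) : ENNReal := essSup (fun x => ENNReal.ofReal (f x)) lam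

/-- The `i`-th Ulam interval `J_{i+1} = [i/k, (i+1)/k)` of the uniform partition of `[0,1]`
into `k` subintervals. -/
noncomputable def Jint (k i : ℕ) : Set ℝ := Set.Ico ((i : ℝ) / k) (((i : ℝ) + 1) / k)

/-- The Ulam projection `Q^{(k)} f = ∑_{i=1}^k (k ∫_{J_i} f dλ) · χ_{J_i}` onto functions
constant on the elements of the uniform partition into `k` subintervals. -/
noncomputable def Qk (k : ℕ) (f : ℝ → ℝ) : ℝ → ℝ := fun x =>
  ∑ i ∈ Finset.range k,
    Set.indicator (Jint k i) (fun _ => (k : ℝ) * ∫ y in Jint k i, f y ∂lam) x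

/-- `fnk` is a normalized fixed point of the Ulam operator `P^{(k)}_σ = Q^{(k)} ∘ P_σ`:
it is constant on each `J_i`, non-negative, of integral `1`, and `Q^{(k)} (P_σ fnk) = fnk`
`λ`-a.e. (where the Frobenius–Perron image `P_σ fnk` is realized by a version `g`). -/
def IsUlamFixed (σ : ℝ → ℝ) (k : ℕ) (fnk : ℝ → ℝ) : Prop :=
  MeasureTheory.Integrable fnk lam ∧
  (∀ i : ℕ, i < k → ∀ x ∈ Jint k i, ∀ y ∈ Jint k i, fnk x = fnk y) ∧
  (∀ x ∈ Set.Icc (0:ℝ) 1, 0 ≤ fnk x) ∧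
  (∫ x, fnk x ∂lam) = 1 ∧
  ∃ g : ℝ → ℝ, MeasureTheory.Integrable g lam ∧
    (∀ A : Set ℝ, MeasurableSet A → A ⊆ Set.Icc (0:ℝ) 1 →
      ∫ x in A, g x ∂lam = ∫ x in σ ⁻¹' A, fnk x ∂lam) ∧
    Qk k g =ᵐ[lam] fnk

/-!
A function constant on the `J_i` is a combination `∑ i, b i • χ_[0, (i+1)/k)` of indicators of
layers, and it is non-increasing exactly when every `b i ≥ 0`. For a fixed point of the Ulam
operator, `b` is a left fixed vector of a matrix `H`: the `(i, j)` entry compares how much of the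
layer `[0, (i+1)/k)` is sent into two consecutive bins. Reflecting each convex branch in the point
where it reaches the common boundary of the bins shows that the lower bin receives at least as much
as the upper one, so `H` is nonnegative. Moreover `H` does not increase the mass
`∑ i, (i + 1) * p i` of a vector `p ≥ 0`, and since `τ_n` stretches `[0, a_n)` linearly, every layer
except the top one passes some of its mass to a higher layer. Comparing masses then forces a left
fixed vector to have constant sign, and positivity of the integral excludes `b ≤ 0`.
-/

section FixedVectors

open Matrix

variable {ι R : Type*} [Fintype ι] [CommRing R] [LinearOrder R] [IsStrictOrderedRing R]
  {H : Matrix ι ι R} {b p w : ι → R}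

theorem vecMul_eq_of_le_vecMul (hw : ∀ i, 0 < w i) (hHw : H *ᵥ w ≤ w) (hp : 0 ≤ p)
    (hpH : p ≤ p ᵥ* H) : p ᵥ* H = p := by
  -- `H` cannot increase the `w`-mass, so no coordinate of `p ≤ p ᵥ* H` can be strict.
  have hmass : ∑ i, (p ᵥ* H) i * w i ≤ ∑ i, p i * w i := calc
    (p ᵥ* H) ⬝ᵥ w = p ⬝ᵥ H *ᵥ w := (dotProduct_mulVec p H w).symm
    _ ≤ p ⬝ᵥ w := dotProduct_le_dotProduct_of_nonneg_left hHw hp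
  have hle : ∀ i ∈ Finset.univ, p i * w i ≤ (p ᵥ* H) i * w i := fun i _ =>
    mul_le_mul_of_nonneg_right (hpH i) (hw i).le
  have heq := (Finset.sum_eq_sum_iff_of_le hle).1 (hmass.antisymm' (Finset.sum_le_sum hle))
  exact funext fun i => (mul_right_cancel₀ (hw i).ne' (heq i (Finset.mem_univ i))).symm

variable [LinearOrder ι] [OrderTop ι]

theorem eq_zero_of_le_vecMul (hH : ∀ i j, 0 ≤ H i j) (hw : ∀ i, 0 < w i) (hHw : H *ᵥ w ≤ w)
    (hup : ∀ i, i ≠ ⊤ → ∃ j > i, 0 < H i j) (hp : 0 ≤ p) (hpH : p ≤ p ᵥ* H) (htop : p ⊤ = 0) :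
    p = 0 := by
  have hfix := vecMul_eq_of_le_vecMul hw hHw hp hpH
  funext i
  induction i using WellFoundedGT.induction with
  | ind i ih =>
    rcases eq_or_ne i ⊤ with rfl | hi
    · exact htop
    obtain ⟨j, hij, hHij⟩ := hup i hi
    have hsum : ∑ l, p l * H l j = 0 := (congrFun hfix j).trans (ih j hij)
    have hterm := (Finset.sum_eq_zero_iff_of_nonneg fun l _ => mul_nonneg (hp l) (hH l j)).1 hsum i
      (Finset.mem_univ i)
    exact (mul_eq_zero.1 hterm).resolve_right hHij.ne'

theorem nonpos_of_vecMul_eq (hH : ∀ i j, 0 ≤ H i j) (hw : ∀ i, 0 < w i) (hHw : H *ᵥ w ≤ w)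
    (hup : ∀ i, i ≠ ⊤ → ∃ j > i, 0 < H i j) (hb : b ᵥ* H = b) (htop : b ⊤ ≤ 0) : b ≤ 0 := by
  have hmono : b ≤ b⁺ ᵥ* H := hb.ge.trans fun j =>
    dotProduct_le_dotProduct_of_nonneg_right (le_posPart b) fun i => hH i j
  have hnonneg : 0 ≤ b⁺ ᵥ* H := fun j =>
    Finset.sum_nonneg fun i _ => mul_nonneg (posPart_nonneg b i) (hH i j)
  exact posPart_eq_zero.1 <| eq_zero_of_le_vecMul hH hw hHw hup (posPart_nonneg b)
    (sup_le hmono hnonneg) (sup_eq_right.2 htop)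

theorem nonneg_or_nonpos_of_vecMul_eq (hH : ∀ i j, 0 ≤ H i j) (hw : ∀ i, 0 < w i)
    (hHw : H *ᵥ w ≤ w) (hup : ∀ i, i ≠ ⊤ → ∃ j > i, 0 < H i j) (hb : b ᵥ* H = b) :
    0 ≤ b ∨ b ≤ 0 := by
  rcases le_total (b ⊤) 0 with htop | htop
  · exact .inr (nonpos_of_vecMul_eq hH hw hHw hup hb htop)
  · refine .inl (neg_nonpos.1 (nonpos_of_vecMul_eq hH hw hHw hup ?_ (neg_nonpos.2 htop)))
    rw [neg_vecMul, hb]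

end FixedVectors

/-- The law of `σ` under `μ` gives at least as much mass to a bin of `[0, ∞)` as to the bin of the
same width directly above it. Unlike monotonicity of a density, this condition on the law
does not require it to be absolutely continuous. -/
structure HasAntitoneHistograms {α : Type*} [MeasurableSpace α] (σ : α → ℝ) (μ : Measure α) :
    Prop where
  aemeasurable : AEMeasurable σ μ
  measure_preimage_le : ∀ ⦃u h : ℝ⦄, 0 ≤ u → 0 < h →
    μ (σ ⁻¹' Ico (u + h) (u + h + h)) ≤ μ (σ ⁻¹' Ico u (u + h))

namespace HasAntitoneHistograms

variable {α : Type*} [MeasurableSpace α] {σ σ' : α → ℝ} {μ ν : Measure α}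

theorem zero_measure : HasAntitoneHistograms σ (0 : Measure α) :=
  ⟨aemeasurable_zero_measure, fun _ _ _ _ => le_rfl⟩

theorem add_measure (hμ : HasAntitoneHistograms σ μ) (hν : HasAntitoneHistograms σ ν) :
    HasAntitoneHistograms σ (μ + ν) where
  aemeasurable := hμ.aemeasurable.add_measure hν.aemeasurable
  measure_preimage_le _ _ hu hh :=
    add_le_add (hμ.measure_preimage_le hu hh) (hν.measure_preimage_le hu hh)

theorem congr (hσ : HasAntitoneHistograms σ μ) (h : σ =ᵐ[μ] σ') : HasAntitoneHistograms σ' μ where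
  aemeasurable := hσ.aemeasurable.congr h
  measure_preimage_le u w hu hw := by
    rw [← measure_congr (h.preimage _), ← measure_congr (h.preimage _)]
    exact hσ.measure_preimage_le hu hw

end HasAntitoneHistograms

section ConvexBranch

variable {φ : ℝ → ℝ} {s : Set ℝ} {p q β x : ℝ}

theorem monotoneOn_of_convexOn_of_isMinOn (hφ : ConvexOn ℝ s φ) (hp : p ∈ s)
    (hmin : IsMinOn φ s p) : MonotoneOn φ (s ∩ Ici p) := fun _ hx _ hy hxy =>
  (hφ.le_max_of_mem_Icc hp hy.1 ⟨hx.2, hxy⟩).trans (max_le (hmin hy.1) le_rfl)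

theorem lt_two_mul_sub_of_convexOn (hφ : ConvexOn ℝ s φ) (hp : p ∈ s) (hx : x ∈ s) (hpβ : p < β)
    (hβx : β < x) (hlt : φ p < φ β) (hincr : φ x - φ β < φ β - φ p) : p < 2 * β - x := by
  -- The climb after `β` is lower but at least as steep, so it takes less room.
  have hslope := hφ.slope_mono_adjacent hp hx hpβ hβx
  rw [div_le_div_iff₀ (sub_pos.2 hpβ) (sub_pos.2 hβx)] at hslope
  have hlen : x - β < β - p := lt_of_mul_lt_mul_left
    (hslope.trans_lt (mul_lt_mul_of_pos_right hincr (sub_pos.2 hpβ))) (sub_pos.2 hlt).le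
  linarith

theorem two_mul_le_add_reflection_of_convexOn (hφ : ConvexOn ℝ s φ) (hy : 2 * β - x ∈ s)
    (hx : x ∈ s) : 2 * φ β ≤ φ (2 * β - x) + φ x := by
  have hmid := hφ.2 hy hx one_half_pos.le one_half_pos.le (add_halves (1 : ℝ))
  have hβ : (1 / 2 : ℝ) • (2 * β - x) + (1 / 2 : ℝ) • x = β := by
    simp only [smul_eq_mul]
    ring
  rw [hβ] at hmid
  simp only [smul_eq_mul] at hmid
  linarith

theorem lt_of_convexOn_of_left_lt {y : ℝ} (hφ : ConvexOn ℝ s φ) (hp : p ∈ s) (hβ : β ∈ s)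
    (hpy : p ≤ y) (hyβ : y < β) (hlt : φ p < φ β) : φ y < φ β := by
  rcases lt_or_ge (φ p) (φ y) with h | h
  · have hpy : p < y := hpy.lt_of_ne (by rintro rfl; exact h.false)
    exact hφ.lt_right_of_left_lt hp hβ (openSegment_eq_Ioo (hpy.trans hyβ) ▸ ⟨hpy, hyβ⟩) h
  · exact h.trans_lt hlt

theorem reflection_mem_of_convexOn {u h : ℝ} (hφ : ConvexOn ℝ (Ico p q) φ) (hφp : φ p = 0)
    (hu : 0 ≤ u) (hh : 0 < h) (hpβ : p < β) (hφβ : φ β = u + h) (hβx : β < x)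
    (hxq : x < q) (hφx : φ x < u + h + h) :
    2 * β - x ∈ Ico p q ∩ φ ⁻¹' Ico u (u + h) := by
  have hp : p ∈ Ico p q := ⟨le_rfl, (hpβ.trans hβx).trans hxq⟩
  have hβ : β ∈ Ico p q := ⟨hpβ.le, hβx.trans hxq⟩
  have hx : x ∈ Ico p q := ⟨(hpβ.trans hβx).le, hxq⟩
  have hlt : φ p < φ β := by linarith
  have hpy : p < 2 * β - x :=
    lt_two_mul_sub_of_convexOn hφ hp hx hpβ hβx hlt (by linarith)
  have hy : 2 * β - x ∈ Ico p q := ⟨hpy.le, by linarith⟩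
  have hmid := two_mul_le_add_reflection_of_convexOn hφ hy hx
  have hyβ := lt_of_convexOn_of_left_lt hφ hp hβ hpy.le (by linarith) hlt
  exact ⟨hy, by linarith, by linarith⟩

theorem volume_preimage_Ico_le_of_convexOn {u h : ℝ} (hφ : ConvexOn ℝ (Ico p q) φ)
    (hcont : ContinuousOn φ (Ico p q)) (hφp : φ p = 0) (hu : 0 ≤ u) (hh : 0 < h) :
    volume (Ico p q ∩ φ ⁻¹' Ico (u + h) (u + h + h)) ≤
      volume (Ico p q ∩ φ ⁻¹' Ico u (u + h)) := by
  rcases (Ico p q ∩ φ ⁻¹' Ico (u + h) (u + h + h)).eq_empty_or_nonempty with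
    hempty | ⟨z, hz, hφz, -⟩
  · simp only [hempty, measure_empty, zero_le]
  have hpq : p < q := hz.1.trans_lt hz.2
  obtain ⟨β, ⟨hpβ, hβz⟩, hφβ⟩ : u + h ∈ φ '' Icc p z :=
    intermediate_value_Icc hz.1 (hcont.mono (Icc_subset_Ico_right hz.2))
      ⟨by linarith, hφz⟩
  have hβ : β ∈ Ico p q := ⟨hpβ, hβz.trans_lt hz.2⟩
  have hpβ : p < β := hpβ.lt_of_ne (by rintro rfl; linarith)
  have hsub : Ico p q ∩ φ ⁻¹' Ico (u + h) (u + h + h) ⊆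
      (2 * β - ·) ⁻¹' (insert β (Ico p q ∩ φ ⁻¹' Ico u (u + h))) := by
    rintro x ⟨hx, hφx, hφx'⟩
    rcases lt_trichotomy x β with hxβ | rfl | hβx
    · exact absurd (lt_of_convexOn_of_left_lt hφ ⟨le_rfl, hpq⟩ hβ hx.1 hxβ (by linarith))
        (not_lt.2 (hφβ.trans_le hφx))
    · exact .inl (by ring)
    · exact .inr (reflection_mem_of_convexOn hφ hφp hu hh hpβ hφβ hβx hx.2 hφx')
  calc
    _ ≤ volume ((2 * β - ·) ⁻¹' (insert β (Ico p q ∩ φ ⁻¹' Ico u (u + h)))) := measure_mono hsub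
    _ = volume (insert β (Ico p q ∩ φ ⁻¹' Ico u (u + h))) :=
      (Measure.measurePreserving_sub_left volume (2 * β)).measure_preimage_emb
        (Homeomorph.subLeft (2 * β)).measurableEmbedding _
    _ = _ := measure_congr (insert_ae_eq_self _ _)

theorem HasAntitoneHistograms.of_convexOn (hφ : ConvexOn ℝ (Ico p q) φ)
    (hcont : ContinuousOn φ (Ico p q)) (hφp : φ p = 0) (hnonneg : ∀ x ∈ Ico p q, 0 ≤ φ x) :
    HasAntitoneHistograms φ (volume.restrict (Ico p q)) := by
  rcases le_or_gt q p with hqp | hpq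
  · rw [Ico_eq_empty hqp.not_gt, Measure.restrict_empty]
    exact .zero_measure
  have hmono : MonotoneOn φ (Ico p q) :=
    have hmin : IsMinOn φ (Ico p q) p := fun x hx => hφp.trans_le (hnonneg x hx)
    (monotoneOn_of_convexOn_of_isMinOn hφ ⟨le_rfl, hpq⟩ hmin).mono fun x hx => ⟨hx, hx.1⟩
  refine ⟨aemeasurable_restrict_of_monotoneOn measurableSet_Ico hmono, fun u h hu hh => ?_⟩
  simp only [Measure.restrict_apply' measurableSet_Ico, inter_comm _ (Ico p q)]
  exact volume_preimage_Ico_le_of_convexOn hφ hcont hφp hu hh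

end ConvexBranch

/-- The part of the data `τ`, `a` that determines `τ_n`: points `1 = a 0 > ⋯ > a n > 0` and, on each
`[a (m+1), a m)` with `m < n`, a nonnegative continuous convex branch with value `0` at the left
endpoint. -/
structure IsPiecewiseConvex (τ : ℝ → ℝ) (a : ℕ → ℝ) (n : ℕ) : Prop where
  partition_zero : a 0 = 1
  strictAntiOn : StrictAntiOn a (Iic n)
  partition_pos : 0 < a n
  convexOn : ∀ m < n, ConvexOn ℝ (Ico (a (m + 1)) (a m)) τ
  continuousOn : ∀ m < n, ContinuousOn τ (Ico (a (m + 1)) (a m))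
  map_partition : ∀ m < n, τ (a (m + 1)) = 0
  nonneg : ∀ m < n, ∀ x ∈ Ico (a (m + 1)) (a m), 0 ≤ τ x

theorem PCApprox.isPiecewiseConvex {τ : ℝ → ℝ} {a d : ℕ → ℝ} {N : ℕ} (hτ : PCApprox τ a d N)
    (n : ℕ) : IsPiecewiseConvex τ a n := by
  have hpos (m : ℕ) : 0 < a m :=
    (hτ.a_anti.antitone.le_of_tendsto hτ.a_lim (m + 1)).trans_lt (hτ.a_anti m.lt_succ_self)
  have hle (m : ℕ) : a m ≤ 1 := hτ.a_zero ▸ hτ.a_anti.antitone m.zero_le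
  exact
    { partition_zero := hτ.a_zero
      strictAntiOn := hτ.a_anti.strictAntiOn _
      partition_pos := hpos n
      convexOn := fun m _ => hτ.conv m
      continuousOn := fun m _ => hτ.cont m
      map_partition := fun m _ => hτ.map_a m
      nonneg := fun m _ x hx =>
        (hτ.mapsTo ⟨(hpos (m + 1)).le.trans hx.1, hx.2.le.trans (hle m)⟩).1 }

namespace IsPiecewiseConvex

variable {τ : ℝ → ℝ} {a : ℕ → ℝ} {n : ℕ}

theorem hasAntitoneHistograms_branches (hτ : IsPiecewiseConvex τ a n) (s : ℝ) :
    ∀ m ≤ n, HasAntitoneHistograms τ (volume.restrict (Ico (a m) 1 ∩ Iio s)) := by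
  intro m
  induction m with
  | zero =>
    intro _
    rw [hτ.partition_zero, Ico_self, empty_inter, Measure.restrict_empty]
    exact .zero_measure
  | succ m ih =>
    intro hm
    have hbranch : Ico (a (m + 1)) (min (a m) s) ⊆ Ico (a (m + 1)) (a m) :=
      Ico_subset_Ico_right (min_le_left _ _)
    have hsplit : Ico (a (m + 1)) 1 ∩ Iio s =
        Ico (a (m + 1)) (min (a m) s) ∪ (Ico (a m) 1 ∩ Iio s) := by
      have hstep : a (m + 1) ≤ a m := (hτ.strictAntiOn (mem_Iic.2 (by omega)) hm m.lt_succ_self).le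
      have hle : a m ≤ 1 := hτ.partition_zero ▸
        hτ.strictAntiOn.antitoneOn n.zero_le (mem_Iic.2 (by omega)) m.zero_le
      rw [← Ico_inter_Iio, ← union_inter_distrib_right, Ico_union_Ico_eq_Ico hstep hle]
    rw [hsplit, Measure.restrict_union
      (disjoint_left.2 fun x hx hx' => (hbranch hx).2.not_ge hx'.1.1)
      (measurableSet_Ico.inter measurableSet_Iio)]
    refine .add_measure ?_ (ih (by omega))
    exact .of_convexOn ((hτ.convexOn m hm).subset hbranch (convex_Ico _ _))
      ((hτ.continuousOn m hm).mono hbranch) (hτ.map_partition m hm)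
      fun x hx => hτ.nonneg m hm x (hbranch hx)

theorem partition_le_one (hτ : IsPiecewiseConvex τ a n) : a n ≤ 1 :=
  hτ.partition_zero ▸ hτ.strictAntiOn.antitoneOn n.zero_le self_mem_Iic n.zero_le

theorem hasAntitoneHistograms_tauN (hτ : IsPiecewiseConvex τ a n) {s : ℝ} (hs : s ≤ 1) :
    HasAntitoneHistograms (tauN τ a n) (volume.restrict (Ico 0 s)) := by
  have hsplit : Ico 0 s = Ico 0 (min (a n) s) ∪ (Ico (a n) 1 ∩ Iio s) := by
    rw [← Ico_inter_Iio, ← union_inter_distrib_right,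
      Ico_union_Ico_eq_Ico hτ.partition_pos.le hτ.partition_le_one, Ico_inter_Iio, min_eq_right hs]
  have hlinear : HasAntitoneHistograms ((a n)⁻¹ • id) (volume.restrict (Ico 0 (min (a n) s))) := by
    have hinv : 0 ≤ (a n)⁻¹ := (inv_pos.2 hτ.partition_pos).le
    exact .of_convexOn ((convexOn_id (convex_Ico _ _)).smul hinv)
      (continuousOn_id.const_smul _) (mul_zero _) fun x hx => mul_nonneg hinv hx.1
  rw [hsplit, Measure.restrict_union
    (disjoint_left.2 fun x hx hx' => (hx.2.trans_le (min_le_left _ _)).not_ge hx'.1.1)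
    (measurableSet_Ico.inter measurableSet_Iio)]
  refine .add_measure (hlinear.congr ?_) ((hτ.hasAntitoneHistograms_branches s n le_rfl).congr ?_)
  · filter_upwards [ae_restrict_mem measurableSet_Ico] with x hx
    simp only [Pi.smul_apply, id_eq, smul_eq_mul, tauN, if_pos (hx.2.trans_le (min_le_left _ _)),
      div_eq_inv_mul]
  · filter_upwards [ae_restrict_mem (measurableSet_Ico.inter measurableSet_Iio)] with x hx
    exact (if_neg hx.1.1.not_gt).symm

theorem volume_tauN_preimage_Ico_pos (hτ : IsPiecewiseConvex τ a n) (hn : 0 < n) {s t : ℝ}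
    (hs : 0 < s) (hst : s < t) (ht : t ≤ 1) :
    0 < volume.restrict (Ico 0 s) (tauN τ a n ⁻¹' Ico s t) := by
  have han := hτ.partition_pos
  have han' : a n < 1 := hτ.partition_zero ▸ hτ.strictAntiOn n.zero_le self_mem_Iic hn
  have hsub : Ico (a n * s) (min s (a n * t)) ⊆ tauN τ a n ⁻¹' Ico s t ∩ Ico 0 s := by
    intro x hx
    have hxs : x < s := hx.2.trans_le (min_le_left _ _)
    have hxt : x < a n * t := hx.2.trans_le (min_le_right _ _)
    have hxa : x < a n := hxt.trans_le (mul_le_of_le_one_right han.le ht)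
    refine ⟨?_, (by positivity : 0 ≤ a n * s).trans hx.1, hxs⟩
    simp only [mem_preimage, tauN, if_pos hxa, mem_Ico, le_div_iff₀' han, div_lt_iff₀' han]
    exact ⟨hx.1, hxt⟩
  have hlt : a n * s < min s (a n * t) :=
    lt_min (mul_lt_of_lt_one_left hs han') (mul_lt_mul_of_pos_left hst han)
  calc 0 < volume (Ico (a n * s) (min s (a n * t))) := by
        rw [Real.volume_Ico, ENNReal.ofReal_pos]
        exact sub_pos.2 hlt
    _ ≤ volume (tauN τ a n ⁻¹' Ico s t ∩ Ico 0 s) := measure_mono hsub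
    _ = _ := (Measure.restrict_apply' measurableSet_Ico).symm

end IsPiecewiseConvex

section Ulam

variable {k : ℕ} {σ f g : ℝ → ℝ}

/-- `f` is constant on each element of the uniform partition of `[0,1)` into `k` subintervals. -/
def IsUlamStep (k : ℕ) (f : ℝ → ℝ) : Prop :=
  ∀ i < k, ∀ x ∈ Jint k i, ∀ y ∈ Jint k i, f x = f y

/-- The support `J_1 ∪ ⋯ ∪ J_{i+1}` of the `i`-th layer of a step function. -/
abbrev ulamLayer (k i : ℕ) : Set ℝ := Ico 0 (((i : ℝ) + 1) / k)

/-- The value on `J_{j+1}` of a step function `f`, read off at the left endpoint and extended by `0`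
beyond the last subinterval. -/
noncomputable def ulamHeight (k : ℕ) (f : ℝ → ℝ) (j : ℕ) : ℝ :=
  if j < k then f (j / k) else 0

/-- The coefficient of the `i`-th layer in the decomposition of a step function into layers. At
`i + 1 = k` it is the last height itself, because heights vanish from `k` on. -/
noncomputable def ulamDrop (k : ℕ) (f : ℝ → ℝ) (i : ℕ) : ℝ :=
  ulamHeight k f i - ulamHeight k f (i + 1)

/-- `g` is a version of the Frobenius–Perron image `P_σ f` on `[0,1]`. -/
structure IsFrobeniusPerron (σ f g : ℝ → ℝ) : Prop where
  integrable : Integrable g lam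
  setIntegral_eq : ∀ A, MeasurableSet A → A ⊆ Icc 0 1 →
    ∫ x in A, g x ∂lam = ∫ x in σ ⁻¹' A, f x ∂lam

theorem lam_eq_restrict_Ico : lam = volume.restrict (Ico 0 1) :=
  Measure.restrict_congr_set Ico_ae_eq_Icc.symm

theorem ae_lam_mem_Ico : ∀ᵐ x ∂lam, x ∈ Ico (0 : ℝ) 1 :=
  lam_eq_restrict_Ico ▸ ae_restrict_mem measurableSet_Ico

theorem mem_Jint_iff (hk : 0 < k) {i : ℕ} {x : ℝ} : x ∈ Jint k i ↔ 0 ≤ x ∧ ⌊k * x⌋₊ = i := by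
  have hk' : (0 : ℝ) < k := Nat.cast_pos.2 hk
  simp only [Jint, mem_Ico, div_le_iff₀' hk', lt_div_iff₀' hk']
  constructor
  · rintro ⟨h₁, h₂⟩
    have hkx : 0 ≤ k * x := i.cast_nonneg.trans h₁
    exact ⟨nonneg_of_mul_nonneg_right hkx hk', (Nat.floor_eq_iff hkx).2 ⟨h₁, h₂⟩⟩
  · rintro ⟨hx, h⟩
    exact (Nat.floor_eq_iff (by positivity)).1 h

theorem mem_ulamLayer_iff (hk : 0 < k) {i : ℕ} {x : ℝ} :
    x ∈ ulamLayer k i ↔ 0 ≤ x ∧ ⌊k * x⌋₊ ≤ i := by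
  simp only [ulamLayer, mem_Ico, lt_div_iff₀' (Nat.cast_pos (α := ℝ).2 hk)]
  refine and_congr_right fun hx => ?_
  rw [← Nat.lt_succ_iff, Nat.floor_lt (by positivity), Nat.cast_succ]

theorem floor_mul_lt (hk : 0 < k) {x : ℝ} (hx : x ∈ Ico (0 : ℝ) 1) : ⌊k * x⌋₊ < k :=
  (Nat.floor_lt (mul_nonneg k.cast_nonneg hx.1)).2
    (mul_lt_of_lt_one_right (Nat.cast_pos.2 hk) hx.2)

theorem ulamLayer_subset {i : ℕ} (hi : i < k) : ulamLayer k i ⊆ Ico 0 1 :=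
  Ico_subset_Ico_right (div_le_one_of_le₀ (by exact_mod_cast hi) k.cast_nonneg)

theorem Jint_subset {i : ℕ} (hi : i < k) : Jint k i ⊆ Ico 0 1 :=
  (Ico_subset_Ico_left (by positivity)).trans (ulamLayer_subset hi)

theorem natCast_div_mem_Jint (hk : 0 < k) (j : ℕ) : (j / k : ℝ) ∈ Jint k j :=
  ⟨le_rfl, by gcongr; exact lt_add_one _⟩

theorem IsUlamStep.eq_ulamHeight (hf : IsUlamStep k f) (hk : 0 < k) {x : ℝ}
    (hx : x ∈ Ico (0 : ℝ) 1) : f x = ulamHeight k f ⌊k * x⌋₊ := by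
  have hlt := floor_mul_lt hk hx
  rw [ulamHeight, if_pos hlt]
  exact hf _ hlt x ((mem_Jint_iff hk).2 ⟨hx.1, rfl⟩) _ (natCast_div_mem_Jint hk _)

theorem sum_Ico_ulamDrop {j : ℕ} (hj : j ≤ k) :
    ∑ i ∈ Finset.Ico j k, ulamDrop k f i = ulamHeight k f j := by
  simp only [ulamDrop]
  rw [← neg_inj, ← Finset.sum_neg_distrib]
  simp only [neg_sub, Finset.sum_Ico_sub _ hj]
  rw [ulamHeight, if_neg (lt_irrefl k), zero_sub]

theorem IsUlamStep.eq_sum_indicator (hf : IsUlamStep k f) (hk : 0 < k) {x : ℝ}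
    (hx : x ∈ Ico (0 : ℝ) 1) :
    f x = ∑ i ∈ Finset.range k, (ulamLayer k i).indicator (fun _ => ulamDrop k f i) x := by
  classical
  have hfilter : {i ∈ Finset.range k | x ∈ ulamLayer k i} = Finset.Ico ⌊k * x⌋₊ k := by
    ext i
    simp only [Finset.mem_filter, Finset.mem_range, Finset.mem_Ico, mem_ulamLayer_iff hk, hx.1,
      true_and, and_comm]
  simp only [indicator_apply]
  rw [← Finset.sum_filter, hfilter, sum_Ico_ulamDrop (floor_mul_lt hk hx).le,
    hf.eq_ulamHeight hk hx]

theorem IsUlamStep.setIntegral_eq (hf : IsUlamStep k f) (hk : 0 < k) (T : Set ℝ) :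
    ∫ x in T, f x ∂lam =
      ∑ i ∈ Finset.range k, ulamDrop k f i * (volume.restrict (ulamLayer k i)).real T := by
  have : IsFiniteMeasure lam := ⟨by simp [lam]⟩
  have hlayers : f =ᵐ[lam.restrict T] fun x =>
      ∑ i ∈ Finset.range k, (ulamLayer k i).indicator (fun _ => ulamDrop k f i) x :=
    ae_restrict_of_ae <| ae_lam_mem_Ico.mono fun x hx => hf.eq_sum_indicator hk hx
  rw [integral_congr_ae hlayers, integral_finsetSum _ fun i _ =>
    (integrable_const _).indicator measurableSet_Ico]
  refine Finset.sum_congr rfl fun i hi => ?_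
  have hlayer : ulamLayer k i ⊆ Ico 0 1 := ulamLayer_subset (Finset.mem_range.1 hi)
  rw [integral_indicator_const _ measurableSet_Ico, smul_eq_mul, mul_comm,
    measureReal_restrict_apply measurableSet_Ico, lam_eq_restrict_Ico,
    measureReal_restrict_apply' measurableSet_Ico, measureReal_restrict_apply' measurableSet_Ico,
    inter_right_comm, inter_eq_left.2 hlayer, inter_comm]

theorem Qk_apply_of_mem (hk : 0 < k) {i : ℕ} (hi : i < k) {x : ℝ} (hx : x ∈ Jint k i) :
    Qk k g x = k * ∫ y in Jint k i, g y ∂lam := by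
  rw [Qk, Finset.sum_eq_single_of_mem i (Finset.mem_range.2 hi), indicator_of_mem hx]
  intro j _ hji
  exact indicator_of_notMem
    (fun hxj => hji (((mem_Jint_iff hk).1 hxj).2.symm.trans ((mem_Jint_iff hk).1 hx).2)) _

theorem lam_Jint_ne_zero (hk : 0 < k) {i : ℕ} (hi : i < k) : lam (Jint k i) ≠ 0 := by
  rw [lam_eq_restrict_Ico, Measure.restrict_eq_self _ (Jint_subset hi), Jint, Real.volume_Ico,
    ENNReal.ofReal_ne_zero_iff, sub_pos]
  gcongr
  exact lt_add_one _

theorem IsUlamStep.ulamHeight_eq_of_fixed (hf : IsUlamStep k f) (hk : 0 < k)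
    (hg : IsFrobeniusPerron σ f g) (hfix : Qk k g =ᵐ[lam] f) {j : ℕ} (hj : j < k) :
    ulamHeight k f j = k * ∫ x in σ ⁻¹' Jint k j, f x ∂lam := by
  obtain ⟨x, hxJ, hx⟩ :=
    ((frequently_ae_mem_iff.2 (lam_Jint_ne_zero hk hj)).and_eventually hfix).exists
  rw [← hg.setIntegral_eq (Jint k j) measurableSet_Ico ((Jint_subset hj).trans Ico_subset_Icc_self),
    ← Qk_apply_of_mem hk hj hxJ, hx, hf.eq_ulamHeight hk (Jint_subset hj hxJ),
    ((mem_Jint_iff hk).1 hxJ).2]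

/-- The average over `J_{j+1}` of the image under `σ` of Lebesgue measure on the `i`-th layer,
extended by `0` beyond the last subinterval. -/
noncomputable def layerHist (σ : ℝ → ℝ) (k i j : ℕ) : ℝ :=
  if j < k then k * (volume.restrict (ulamLayer k i)).real (σ ⁻¹' Jint k j) else 0

/-- The matrix of the Ulam operator in the basis of layers, acting on row vectors: its `i`-th row
consists of the layer coefficients of the image of the `i`-th layer. -/
noncomputable def layerMatrix (σ : ℝ → ℝ) (k : ℕ) : Matrix (Fin k) (Fin k) ℝ :=
  .of fun i j => layerHist σ k i j - layerHist σ k i (j + 1)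

theorem layerHist_nonneg (i j : ℕ) : 0 ≤ layerHist σ k i j := by
  rw [layerHist]
  split_ifs
  exacts [by positivity, le_rfl]

theorem layerHist_self (i : ℕ) : layerHist σ k i k = 0 :=
  if_neg (lt_irrefl k)

theorem IsUlamStep.ulamHeight_eq_sum_layerHist (hf : IsUlamStep k f) (hk : 0 < k)
    (hg : IsFrobeniusPerron σ f g) (hfix : Qk k g =ᵐ[lam] f) (j : ℕ) :
    ulamHeight k f j = ∑ i ∈ Finset.range k, ulamDrop k f i * layerHist σ k i j := by
  rcases lt_or_ge j k with hj | hj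
  · rw [hf.ulamHeight_eq_of_fixed hk hg hfix hj, hf.setIntegral_eq hk, Finset.mul_sum]
    simp only [layerHist, if_pos hj, mul_left_comm]
  · simp only [ulamHeight, layerHist, if_neg hj.not_gt, mul_zero, Finset.sum_const_zero]

theorem IsUlamStep.ulamDrop_vecMul_layerMatrix (hf : IsUlamStep k f) (hk : 0 < k)
    (hg : IsFrobeniusPerron σ f g) (hfix : Qk k g =ᵐ[lam] f) :
    Matrix.vecMul (fun i : Fin k => ulamDrop k f i) (layerMatrix σ k) =
      fun j : Fin k => ulamDrop k f j := by
  funext j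
  simp only [Matrix.vecMul, dotProduct, layerMatrix, Matrix.of_apply, mul_sub,
    Finset.sum_sub_distrib]
  rw [← Finset.sum_range fun i => ulamDrop k f i * layerHist σ k i j,
    ← Finset.sum_range fun i => ulamDrop k f i * layerHist σ k i (j + 1),
    ← hf.ulamHeight_eq_sum_layerHist hk hg hfix, ← hf.ulamHeight_eq_sum_layerHist hk hg hfix]
  rfl

theorem antitone_layerHist {i : ℕ}
    (hσ : HasAntitoneHistograms σ (volume.restrict (ulamLayer k i))) :
    Antitone (layerHist σ k i) := by
  refine antitone_nat_of_succ_le fun j => ?_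
  rcases lt_or_ge (j + 1) k with hj | hj
  · have hstep : 0 < (k : ℝ)⁻¹ := inv_pos.2 (Nat.cast_pos.2 (by omega))
    have hle := hσ.measure_preimage_le (u := j / k) (by positivity) hstep
    have hlower : Jint k j = Ico (j / k : ℝ) (j / k + (k : ℝ)⁻¹) := by
      simp only [Jint, add_div, one_div]
    have hupper : Jint k (j + 1) =
        Ico (j / k + (k : ℝ)⁻¹) (j / k + (k : ℝ)⁻¹ + (k : ℝ)⁻¹) := by
      simp only [Jint, Nat.cast_succ, add_div, one_div]
    rw [layerHist, layerHist, if_pos hj, if_pos (by omega), hlower, hupper]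
    exact mul_le_mul_of_nonneg_left (ENNReal.toReal_mono (measure_ne_top _ _) hle) k.cast_nonneg
  · rw [layerHist, if_neg hj.not_gt]
    exact layerHist_nonneg i j

theorem volume_real_ulamLayer (k i : ℕ) : volume.real (ulamLayer k i) = (i + 1) / k := by
  rw [Real.volume_real_Ico_of_le (by positivity), sub_zero]

theorem sum_layerHist_le (hk : 0 < k) {i : ℕ}
    (hσ : HasAntitoneHistograms σ (volume.restrict (ulamLayer k i))) :
    ∑ j ∈ Finset.range k, layerHist σ k i j ≤ i + 1 := by
  set μ := volume.restrict (ulamLayer k i) with hμ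
  have hmeas : ∀ j ∈ Finset.range k, NullMeasurableSet (σ ⁻¹' Jint k j) μ := fun j _ =>
    hσ.aemeasurable.nullMeasurableSet_preimage measurableSet_Ico
  have hdisj : (Finset.range k : Set ℕ).PairwiseDisjoint fun j => σ ⁻¹' Jint k j :=
    fun j _ j' _ hjj' => disjoint_left.2 fun x hx hx' =>
      hjj' (((mem_Jint_iff hk).1 hx).2.symm.trans ((mem_Jint_iff hk).1 hx').2)
  calc ∑ j ∈ Finset.range k, layerHist σ k i j
      = k * ∑ j ∈ Finset.range k, μ.real (σ ⁻¹' Jint k j) := by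
        rw [Finset.mul_sum]
        exact Finset.sum_congr rfl fun j hj => if_pos (Finset.mem_range.1 hj)
    _ = k * μ.real (⋃ j ∈ Finset.range k, σ ⁻¹' Jint k j) := by
        rw [measureReal_biUnion_finset₀ hdisj.aedisjoint hmeas]
    _ ≤ k * μ.real univ := by gcongr; exacts [measure_ne_top _ _, subset_univ _]
    _ = i + 1 := by
        rw [hμ, measureReal_restrict_apply_univ, volume_real_ulamLayer]
        field_simp

theorem layerHist_succ_pos {i : ℕ} (hi : i + 1 < k)
    (hσ : ∀ ⦃s t : ℝ⦄, 0 < s → s < t → t ≤ 1 → 0 < volume.restrict (Ico 0 s) (σ ⁻¹' Ico s t)) :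
    0 < layerHist σ k i (i + 1) := by
  have hk : (0 : ℝ) < k := Nat.cast_pos.2 (by omega)
  rw [layerHist, if_pos hi, Jint, Nat.cast_succ]
  refine mul_pos hk (ENNReal.toReal_pos (hσ ?_ ?_ ?_).ne' (measure_ne_top _ _))
  · positivity
  · gcongr
    exact lt_add_one _
  · rw [div_le_one hk]
    exact_mod_cast hi

theorem layerMatrix_nonneg (hσ : ∀ i < k, HasAntitoneHistograms σ (volume.restrict (ulamLayer k i)))
    (i j : Fin k) : 0 ≤ layerMatrix σ k i j :=
  sub_nonneg.2 (antitone_layerHist (hσ i i.2) (Nat.le_succ j))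

theorem sum_range_succ_mul_sub {R : Type*} [CommRing R] (G : ℕ → R) (n : ℕ) :
    ∑ j ∈ Finset.range n, (G j - G (j + 1)) * (j + 1) = ∑ j ∈ Finset.range n, G j - n * G n := by
  induction n with
  | zero => simp
  | succ n ih =>
    rw [Finset.sum_range_succ, Finset.sum_range_succ, ih, Nat.cast_succ]
    ring

theorem layerMatrix_mulVec_le
    (hσ : ∀ i < k, HasAntitoneHistograms σ (volume.restrict (ulamLayer k i))) :
    (layerMatrix σ k).mulVec (fun i : Fin k => (i + 1 : ℝ)) ≤ fun i : Fin k => (i + 1 : ℝ) :=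
  fun i => calc
    _ = ∑ j ∈ Finset.range k, (layerHist σ k i j - layerHist σ k i (j + 1)) * (j + 1) :=
      (Finset.sum_range _).symm
    _ = ∑ j ∈ Finset.range k, layerHist σ k i j := by
      rw [sum_range_succ_mul_sub, layerHist_self, mul_zero, sub_zero]
    _ ≤ i + 1 := sum_layerHist_le i.pos (hσ i i.2)

theorem exists_layerMatrix_pos {i : Fin k} (hi : (i : ℕ) + 1 < k)
    (hσ : ∀ ⦃s t : ℝ⦄, 0 < s → s < t → t ≤ 1 → 0 < volume.restrict (Ico 0 s) (σ ⁻¹' Ico s t)) :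
    ∃ j > i, 0 < layerMatrix σ k i j := by
  by_contra! hle
  have hmono : MonotoneOn (layerHist σ k i) (Icc (i + 1) k) := by
    refine monotoneOn_of_le_add_one ordConnected_Icc fun j _ hj hj' => sub_nonpos.1 ?_
    exact hle ⟨j, hj'.2⟩ hj.1
  have hlast := hmono ⟨le_rfl, hi.le⟩ ⟨hi.le, le_rfl⟩ hi.le
  exact (layerHist_succ_pos hi hσ).not_ge (hlast.trans_eq (layerHist_self _))

theorem IsUlamStep.integral_eq (hf : IsUlamStep k f) (hk : 0 < k) :
    ∫ x, f x ∂lam = ∑ i ∈ Finset.range k, ulamDrop k f i * ((i + 1) / k) := by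
  simpa only [Measure.restrict_univ, measureReal_restrict_apply_univ, volume_real_ulamLayer] using
    hf.setIntegral_eq hk univ

theorem antitone_ulamHeight (h : ∀ i < k, 0 ≤ ulamDrop k f i) : Antitone (ulamHeight k f) := by
  refine antitone_nat_of_succ_le fun i => ?_
  rcases lt_or_ge i k with hi | hi
  · exact sub_nonneg.1 (h i hi)
  · rw [ulamHeight, ulamHeight, if_neg hi.not_gt, if_neg (by omega)]

theorem ulamDrop_nonneg_of_fixed
    (hanti : ∀ i < k, HasAntitoneHistograms σ (volume.restrict (ulamLayer k i)))
    (hexp : ∀ ⦃s t : ℝ⦄, 0 < s → s < t → t ≤ 1 → 0 < volume.restrict (Ico 0 s) (σ ⁻¹' Ico s t))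
    (hf : IsUlamStep k f) (hk : 0 < k) (hg : IsFrobeniusPerron σ f g) (hfix : Qk k g =ᵐ[lam] f)
    (hpos : 0 < ∫ x, f x ∂lam) : ∀ i < k, 0 ≤ ulamDrop k f i := by
  have : NeZero k := ⟨hk.ne'⟩
  have hup (i : Fin k) (hi : i ≠ ⊤) : ∃ j > i, 0 < layerMatrix σ k i j := by
    have := Fin.lt_def.1 (Ne.lt_top hi)
    exact exists_layerMatrix_pos (by omega) hexp
  rcases nonneg_or_nonpos_of_vecMul_eq (layerMatrix_nonneg hanti) (fun i => by positivity)
    (layerMatrix_mulVec_le hanti) hup (hf.ulamDrop_vecMul_layerMatrix hk hg hfix) with hnn | hnp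
  · exact fun i hi => hnn ⟨i, hi⟩
  · refine absurd hpos (not_lt.2 ?_)
    rw [hf.integral_eq hk]
    exact Finset.sum_nonpos fun i hi =>
      mul_nonpos_of_nonpos_of_nonneg (hnp ⟨i, Finset.mem_range.1 hi⟩) (by positivity)

theorem exists_antitone_ae_eq_of_fixed
    (hanti : ∀ i < k, HasAntitoneHistograms σ (volume.restrict (ulamLayer k i)))
    (hexp : ∀ ⦃s t : ℝ⦄, 0 < s → s < t → t ≤ 1 → 0 < volume.restrict (Ico 0 s) (σ ⁻¹' Ico s t))
    (hf : IsUlamStep k f) (hk : 0 < k) (hg : IsFrobeniusPerron σ f g) (hfix : Qk k g =ᵐ[lam] f)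
    (hpos : 0 < ∫ x, f x ∂lam) : ∃ f₀ : ℝ → ℝ, Antitone f₀ ∧ f =ᵐ[lam] f₀ := by
  refine ⟨fun x => ulamHeight k f ⌊k * x⌋₊, fun x y hxy => ?_,
    ae_lam_mem_Ico.mono fun x hx => hf.eq_ulamHeight hk hx⟩
  apply antitone_ulamHeight (ulamDrop_nonneg_of_fixed hanti hexp hf hk hg hfix hpos)
  gcongr

end Ulam

theorem stmt13_general {τ : ℝ → ℝ} {a : ℕ → ℝ} {n k : ℕ} (hτ : IsPiecewiseConvex τ a n)
    (hn : 0 < n) (hk : 0 < k) {f g : ℝ → ℝ} (hf : IsUlamStep k f)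
    (hg : IsFrobeniusPerron (tauN τ a n) f g) (hfix : Qk k g =ᵐ[lam] f)
    (hpos : 0 < ∫ x, f x ∂lam) : ∃ f₀ : ℝ → ℝ, Antitone f₀ ∧ f =ᵐ[lam] f₀ := by
  refine exists_antitone_ae_eq_of_fixed (fun i hi => hτ.hasAntitoneHistograms_tauN ?_)
    (fun _ _ hs hst ht => hτ.volume_tauN_preimage_Ico_pos hn hs hst ht) hf hk hg hfix hpos
  exact div_le_one_of_le₀ (by exact_mod_cast hi) k.cast_nonneg

/-- Every normalized fixed point `f_{n,k}` of the Ulam operator `P^{(k)}_{τ_n}` is `λ`-a.e.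
equal to a non-increasing function on `[0,1]`. -/
theorem stmt13 (τ : ℝ → ℝ) (a d : ℕ → ℝ) (N : ℕ)
    (hτ : PCApprox τ a d N) (n k : ℕ) (hn : N ≤ n) (hk : 1 ≤ k)
    (fnk : ℝ → ℝ) (hfix : IsUlamFixed (tauN τ a n) k fnk) :
    ∃ f₀ : ℝ → ℝ, AntitoneOn f₀ (Set.Icc 0 1) ∧ fnk =ᵐ[lam] f₀ := by
  obtain ⟨-, hf, -, hmass, g, hg, hgP, hfixed⟩ := hfix
  obtain ⟨f₀, hanti, heq⟩ := stmt13_general (hτ.isPiecewiseConvex n) (hτ.N_pos.trans hn) hk hf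
    ⟨hg, hgP⟩ hfixed (hmass.symm ▸ one_pos)
  exact ⟨f₀, hanti.antitoneOn _, heq⟩
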